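/- arXiv:2510.23199 — 2 statements merged into one kernel-verified Lean document; each statement's English description precedes it below -/
import Mathlib

section
/- (Claim G.4.) Let K ≥ 2, let Q ∈ ℝ^K satisfy Q_1 > Q_2 ≥ … ≥ Q_K, and fix j ∈ {2,…,K}. Then inf { S(Q,P) : P has unique maximizer j, P_j ≥ Q_j, Q_i − (P_j − Q_j) ≤ P_i ≤ Q_i for all i < j, and P_i ≤ Q_i for all i > j } ≥ (1/4) · inf { S(Q,P) : P has unique maximizer j, Q_j ≤ P_j ≤ 2Q_1 − Q_j, Q_i − (P_j − Q_j) ≤ P_i ≤ Q_i for all i < j, and P_i ≤ Q_i for all i > j }. -/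
/-!
Only the points `P` with `P j > 2 Q₀ - Q j` need an argument (`Q₀` is the top entry of `Q`). Write
`Δ = Q₀ - Q j > 0`, `t = P j - Q j > 2Δ`, and contract the displacement `P - Q` towards `0` by
the factor `s = 2Δ / t`, so that `P' = Q + s (P - Q)` satisfies `P' j = 2 Q₀ - Q j` and all the
remaining constraints. The quadratic factor of `S` is multiplied by exactly `s²`. Since
`Q j - Q i ≥ -Δ = -s t / 2`, every gap satisfies `P' j - P' i ≥ (s / 2) (P j - P i)`, so `H₁` grows
by at most `(2 / s)²`. Hence `S(Q, P') ≤ 4 S(Q, P)`.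
-/

open Finset

/-- The largest entry of `Q` (the index set `Fin K` is nonempty in all statements below). -/
noncomputable def Qmax {K : ℕ} (Q : Fin K → ℝ) : ℝ := ⨆ j, Q j

/-- Index `i` is a maximizer of the vector `Q`. -/
def isMax {K : ℕ} (Q : Fin K → ℝ) (i : Fin K) : Prop := ∀ j, Q j ≤ Q i

/-- Index `i` is the unique maximizer of the vector `P`. -/
def uniqueMax {K : ℕ} (P : Fin K → ℝ) (i : Fin K) : Prop :=
  isMax P i ∧ ∀ j, isMax P j → j = i

/-- The gap `Δ_i^Q = Q* - Q_i`. -/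
noncomputable def gapQ {K : ℕ} (Q : Fin K → ℝ) (i : Fin K) : ℝ := Qmax Q - Q i

/-- `D_i(Q)` for a non-maximizing index `i`:
`(2Δ_i^Q)² · Σ_{j≠i} (Δ_j^Q + Δ_i^Q)⁻²`. -/
noncomputable def Dbase {K : ℕ} (Q : Fin K → ℝ) (i : Fin K) : ℝ :=
  (2 * gapQ Q i) ^ 2 * ∑ j ∈ univ.erase i, ((gapQ Q j + gapQ Q i) ^ 2)⁻¹

open Classical in
/-- `D_i(Q)`: for a maximizer `i` it is the minimum of `D_{i'}(Q)` over non-maximizers `i'`. -/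
noncomputable def Dfun {K : ℕ} (Q : Fin K → ℝ) (i : Fin K) : ℝ :=
  if isMax Q i then sInf {x : ℝ | ∃ i', ¬ isMax Q i' ∧ x = Dbase Q i'} else Dbase Q i

/-- The normalization factor `Z(Q) = Σ_i 1/D_i(Q)`. -/
noncomputable def Zfun {K : ℕ} (Q : Fin K → ℝ) : ℝ := ∑ i, (Dfun Q i)⁻¹

open Classical in
/-- The complexity `H₁(P) = Σ_{i ≠ i*(P)} ((max_j P_j) - P_i)⁻²`
(for `P` with a unique maximizer, the non-maximizing indices are exactly those `≠ i*(P)`). -/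
noncomputable def H1 {K : ℕ} (P : Fin K → ℝ) : ℝ :=
  ∑ i ∈ univ.filter (fun i => ¬ isMax P i), ((Qmax P - P i) ^ 2)⁻¹

/-- The stability functional `S(Q,P) = H₁(P) · Σ_i (Q_i - P_i)² / D_i(Q)`. -/
noncomputable def Sfun {K : ℕ} (Q P : Fin K → ℝ) : ℝ :=
  H1 P * ∑ i, (Q i - P i) ^ 2 / Dfun Q i

lemma Dbase_nonneg {K : ℕ} (Q : Fin K → ℝ) (i : Fin K) : 0 ≤ Dbase Q i := by
  unfold Dbase
  positivity

lemma Dfun_nonneg {K : ℕ} (Q : Fin K → ℝ) (i : Fin K) : 0 ≤ Dfun Q i := by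
  unfold Dfun
  split_ifs
  · apply Real.sInf_nonneg
    rintro x ⟨i', -, rfl⟩
    exact Dbase_nonneg Q i'
  · exact Dbase_nonneg Q i

lemma H1_nonneg {K : ℕ} (P : Fin K → ℝ) : 0 ≤ H1 P := by
  unfold H1
  positivity

lemma cost_nonneg {K : ℕ} (Q P : Fin K → ℝ) : 0 ≤ ∑ i, (Q i - P i) ^ 2 / Dfun Q i :=
  Finset.sum_nonneg fun i _ => div_nonneg (sq_nonneg _) (Dfun_nonneg Q i)

lemma Sfun_nonneg {K : ℕ} (Q P : Fin K → ℝ) : 0 ≤ Sfun Q P :=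
  mul_nonneg (H1_nonneg P) (cost_nonneg Q P)

lemma uniqueMax_iff {K : ℕ} (P : Fin K → ℝ) (j : Fin K) :
    uniqueMax P j ↔ ∀ i, i ≠ j → P i < P j := by
  constructor
  · rintro ⟨h1, h2⟩ i hi
    by_contra! h
    exact hi (h2 i fun k => (h1 k).trans h)
  · intro h
    refine ⟨fun i => ?_, fun i hi => ?_⟩
    · rcases eq_or_ne i j with rfl | hij
      · exact le_rfl
      · exact (h i hij).le
    · by_contra hij
      exact absurd (hi j) (not_le.mpr (h i hij))

lemma H1_eq {K : ℕ} (P : Fin K → ℝ) (j : Fin K) (h : uniqueMax P j) :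
    H1 P = ∑ i ∈ univ.erase j, ((P j - P i) ^ 2)⁻¹ := by
  have : Nonempty (Fin K) := ⟨j⟩
  have hmax : Qmax P = P j :=
    le_antisymm (ciSup_le h.1) (le_ciSup (Set.finite_range P).bddAbove j)
  unfold H1
  rw [hmax]
  apply Finset.sum_congr _ fun _ _ => rfl
  ext i
  simp only [mem_filter, mem_univ, true_and, mem_erase, and_true]
  exact not_congr ⟨fun hi => h.2 i hi, fun hi => hi ▸ h.1⟩

/-- Contracting `P - Q` by `s` costs at most a factor `4` in `S`, provided no gap of `P` below its
maximum shrinks by more than the factor `s / 2`. -/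
lemma contract {K : ℕ} (Q P P' : Fin K → ℝ) (j : Fin K) (s : ℝ) (hs : 0 < s)
    (hP : uniqueMax P j) (hP' : ∀ i, P' i = Q i + s * (P i - Q i))
    (hgap : ∀ i, i ≠ j → s / 2 * (P j - P i) ≤ P' j - P' i) :
    uniqueMax P' j ∧ Sfun Q P' ≤ 4 * Sfun Q P := by
  have hlt := (uniqueMax_iff P j).1 hP
  have hu : uniqueMax P' j := by
    rw [uniqueMax_iff]
    intro i hi
    have : 0 < s / 2 * (P j - P i) := mul_pos (by positivity) (sub_pos.2 (hlt i hi))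
    linarith [hgap i hi]
  refine ⟨hu, ?_⟩
  have hH : H1 P' ≤ 4 / s ^ 2 * H1 P := by
    rw [H1_eq P' j hu, H1_eq P j hP, Finset.mul_sum]
    refine Finset.sum_le_sum fun i hi => ?_
    have hij := (Finset.mem_erase.1 hi).1
    have h0 : 0 < P j - P i := sub_pos.2 (hlt i hij)
    have h1 : 0 < s / 2 * (P j - P i) := by positivity
    calc ((P' j - P' i) ^ 2)⁻¹ ≤ ((s / 2 * (P j - P i)) ^ 2)⁻¹ := by
          gcongr
          exact hgap i hij
      _ = 4 / s ^ 2 * ((P j - P i) ^ 2)⁻¹ := by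
          field_simp
          norm_num
  have hC : ∑ i, (Q i - P' i) ^ 2 / Dfun Q i = s ^ 2 * ∑ i, (Q i - P i) ^ 2 / Dfun Q i := by
    rw [Finset.mul_sum]
    refine Finset.sum_congr rfl fun i _ => ?_
    rw [hP' i]
    ring
  unfold Sfun
  rw [hC]
  calc H1 P' * (s ^ 2 * ∑ i, (Q i - P i) ^ 2 / Dfun Q i)
      ≤ 4 / s ^ 2 * H1 P * (s ^ 2 * ∑ i, (Q i - P i) ^ 2 / Dfun Q i) :=
        mul_le_mul_of_nonneg_right hH (mul_nonneg (sq_nonneg s) (cost_nonneg Q P))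
    _ = 4 * (H1 P * ∑ i, (Q i - P i) ^ 2 / Dfun Q i) := by
        field_simp

/-- Claim G.4. -/
theorem claim_G4 (K : ℕ) (hK : 2 ≤ K) (Q : Fin K → ℝ)
    (hanti : ∀ i j : Fin K, i ≤ j → Q j ≤ Q i)
    (hstrict : Q ⟨1, by omega⟩ < Q ⟨0, by omega⟩)
    (j : Fin K) (hj : 0 < j.val) :
    (1 / 4) * sInf {x : ℝ | ∃ P : Fin K → ℝ, uniqueMax P j ∧
        Q j ≤ P j ∧ P j ≤ 2 * Q ⟨0, by omega⟩ - Q j ∧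
        (∀ i, i < j → Q i - (P j - Q j) ≤ P i ∧ P i ≤ Q i) ∧
        (∀ i, j < i → P i ≤ Q i) ∧ x = Sfun Q P}
      ≤ sInf {x : ℝ | ∃ P : Fin K → ℝ, uniqueMax P j ∧ Q j ≤ P j ∧
          (∀ i, i < j → Q i - (P j - Q j) ≤ P i ∧ P i ≤ Q i) ∧
          (∀ i, j < i → P i ≤ Q i) ∧ x = Sfun Q P} := by
  set q := Q ⟨0, by omega⟩ with hq
  have hqle : ∀ i, Q i ≤ q := fun i => hanti _ _ (Fin.mk_le_of_le_val (Nat.zero_le _))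
  have hΔ : Q j < q := lt_of_le_of_lt (hanti ⟨1, by omega⟩ j (Fin.mk_le_of_le_val hj)) hstrict
  set B := {x : ℝ | ∃ P : Fin K → ℝ, uniqueMax P j ∧ Q j ≤ P j ∧
          (∀ i, i < j → Q i - (P j - Q j) ≤ P i ∧ P i ≤ Q i) ∧
          (∀ i, j < i → P i ≤ Q i) ∧ x = Sfun Q P} with hB
  set A := {x : ℝ | ∃ P : Fin K → ℝ, uniqueMax P j ∧
        Q j ≤ P j ∧ P j ≤ 2 * q - Q j ∧
        (∀ i, i < j → Q i - (P j - Q j) ≤ P i ∧ P i ≤ Q i) ∧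
        (∀ i, j < i → P i ≤ Q i) ∧ x = Sfun Q P} with hA
  have hbdd : BddBelow A := by
    refine ⟨0, ?_⟩
    rintro x ⟨P, -, -, -, -, -, rfl⟩
    exact Sfun_nonneg Q P
  have key : ∀ x ∈ B, ∃ y ∈ A, y ≤ 4 * x := by
    rintro x ⟨P, hP, hj1, hlo, hhi, rfl⟩
    by_cases hc : P j ≤ 2 * q - Q j
    · exact ⟨_, ⟨P, hP, hj1, hc, hlo, hhi, rfl⟩, by linarith [Sfun_nonneg Q P]⟩
    push Not at hc
    have ht : 0 < P j - Q j := by linarith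
    obtain ⟨s, hs⟩ : ∃ s, s = 2 * (q - Q j) / (P j - Q j) := ⟨_, rfl⟩
    have hst : s * (P j - Q j) = 2 * (q - Q j) := by rw [hs]; field_simp
    have hs0 : 0 < s := by rw [hs]; exact div_pos (by linarith) ht
    have hs1 : s ≤ 1 := by rw [hs, div_le_one ht]; linarith
    have hle : ∀ i, i ≠ j → P i ≤ Q i := fun i hi =>
      (lt_or_gt_of_ne hi).elim (fun h => (hlo i h).2) (fun h => hhi i h)
    have hle' : ∀ i, i ≠ j → Q i + s * (P i - Q i) ≤ Q i := fun i hi => by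
      nlinarith [hle i hi]
    obtain ⟨hu, hS⟩ := contract Q P (fun i => Q i + s * (P i - Q i)) j s hs0 hP (fun _ => rfl)
      (fun i hi => by
        -- With `x = Q i - P i ≥ 0`, the claim is
        -- `s (t + x) / 2 + (1 - s / 2) (Q j - Q i) ≥ 0`, where `s t / 2 = q - Q j`.
        have h1 := mul_nonneg hs0.le (sub_nonneg.2 (hle i hi))
        have h2 : 0 ≤ (1 - s / 2) * (q - Q i) :=
          mul_nonneg (by linarith) (sub_nonneg.2 (hqle i))
        have h3 : 0 ≤ s * (q - Q j) := mul_nonneg hs0.le (by linarith)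
        nlinarith)
    refine ⟨_, ⟨_, hu, ?_, ?_, ?_, fun i hi => hle' i hi.ne', rfl⟩, hS⟩
    · linarith
    · linarith
    · refine fun i hi => ⟨?_, hle' i hi.ne⟩
      have := mul_le_mul_of_nonneg_left (hlo i hi).1 hs0.le
      linarith
  rcases B.eq_empty_or_nonempty with hE | hne
  · -- Both infima are then infima of the empty set, hence `0` by convention.
    have hAE : A = ∅ := by
      rw [Set.eq_empty_iff_forall_notMem]
      rintro x ⟨P, h1, h2, -, h4, h5, h6⟩
      have : x ∈ B := ⟨P, h1, h2, h4, h5, h6⟩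
      simp [hE] at this
    simp [hE, hAE]
  · refine le_csInf hne fun x hx => ?_
    obtain ⟨y, hy, hyx⟩ := key x hx
    linarith [csInf_le hbdd hy]
end

section
/- (Lemma G.9, bounds on the normalizer Z.) Let K ≥ 2 and let Q ∈ ℝ^K have a unique maximizer. Then the normalization factor Z(Q) = Σ_{i=1}^K 1/D_i(Q) satisfies 1/4 ≤ Z(Q) ≤ 2 + log K. -/
/-!
For a non-maximizer `i`, `D_i = Σ_{j ≠ i} (2Δ_i / (Δ_j + Δ_i))²`. Every summand is at most `4`, and
it is at least `1` as soon as `Δ_j ≤ Δ_i`.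

* Lower bound: every `D_i` (also the one of the maximizer, which is the `D` of some non-maximizer)
  lies in `(0, 4 (K - 1)]`, so `Z ≥ K / (4 (K - 1)) ≥ 1/4`.
* Upper bound: `D_i` is at least the number of non-maximizers `j` with `Δ_j ≤ Δ_i`, the maximizer
  making up for the missing summand `j = i`. Thus, in the order of increasing gaps, the `r`-th
  non-maximizer has `D ≥ r`, and the sum of `1 / D_i` over the non-maximizers is at most the
  harmonic number `H_{K-1} ≤ 1 + log (K - 1)` (`sum_inv_rank_le_harmonic`). The maximizer
  contributes at most `1`.
-/

open Finset

/-- The reciprocals of the ranks of the elements of `s`, ordered by the values of `f`, sum to at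
most the harmonic number of `#s`; ties are given the largest possible rank. -/
lemma sum_inv_rank_le_harmonic {ι : Type*} [DecidableEq ι] (f : ι → ℝ) (s : Finset ι) :
    ∑ i ∈ s, ((#{j ∈ s | f j ≤ f i} : ℕ) : ℝ)⁻¹ ≤ (harmonic #s : ℝ) := by
  induction s using Finset.induction_on_max_value f with
  | empty => simp
  | insert a s ha hmax ih =>
    rw [sum_insert ha, card_insert_of_notMem ha, harmonic_succ]
    -- `a` maximizes `f`, so its rank is the cardinality.
    have h1 : {j ∈ insert a s | f j ≤ f a} = insert a s := by
      apply filter_true_of_mem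
      intro j hj
      rcases mem_insert.1 hj with rfl | hj
      · exact le_rfl
      · exact hmax j hj
    rw [h1, card_insert_of_notMem ha]
    have h2 : ∑ i ∈ s, ((#{j ∈ insert a s | f j ≤ f i} : ℕ) : ℝ)⁻¹
        ≤ ∑ i ∈ s, ((#{j ∈ s | f j ≤ f i} : ℕ) : ℝ)⁻¹ := by
      apply sum_le_sum
      intro i hi
      have hpos : 0 < #{j ∈ s | f j ≤ f i} :=
        card_pos.2 ⟨i, mem_filter.2 ⟨hi, le_rfl⟩⟩
      apply inv_anti₀ (by exact_mod_cast hpos)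
      exact_mod_cast card_le_card (filter_subset_filter _ (subset_insert a s))
    push_cast
    linarith

section

variable {K : ℕ} {Q : Fin K → ℝ}

lemma le_Qmax (Q : Fin K → ℝ) (j : Fin K) : Q j ≤ Qmax Q :=
  le_ciSup (Set.finite_range Q).bddAbove j

lemma gapQ_nonneg (Q : Fin K → ℝ) (j : Fin K) : 0 ≤ gapQ Q j :=
  sub_nonneg.2 (le_Qmax Q j)

lemma gapQ_pos {i : Fin K} (hi : ¬ isMax Q i) : 0 < gapQ Q i := by
  simp only [isMax, not_forall, not_le] at hi
  obtain ⟨j, hj⟩ := hi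
  exact sub_pos.2 (hj.trans_le (le_Qmax Q j))

lemma gapQ_le_of_isMax {i : Fin K} (hi : isMax Q i) (j : Fin K) : gapQ Q i ≤ gapQ Q j :=
  sub_le_sub_left (hi j) _

lemma Dbase_le {i : Fin K} (hi : ¬ isMax Q i) : Dbase Q i ≤ 4 * ((K : ℝ) - 1) := by
  have hp := gapQ_pos hi
  have hK : 1 ≤ K := i.pos
  rw [Dbase, mul_sum]
  have h : ∀ j ∈ univ.erase i, (2 * gapQ Q i) ^ 2 * ((gapQ Q j + gapQ Q i) ^ 2)⁻¹ ≤ 4 := by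
    intro j _
    have hj := gapQ_nonneg Q j
    rw [← div_eq_mul_inv, div_le_iff₀ (by positivity)]
    nlinarith [mul_nonneg hj hp.le, sq_nonneg (gapQ Q j)]
  refine (sum_le_card_nsmul _ _ _ h).trans (le_of_eq ?_)
  rw [card_erase_of_mem (mem_univ i), card_univ, Fintype.card_fin, nsmul_eq_mul, Nat.cast_sub hK]
  push_cast
  ring

open Classical in
/-- The maximizer and the non-maximizers `j ≠ i` with `Δ_j ≤ Δ_i` each contribute at least `1`
to `D_i`. -/
lemma rank_le_Dbase {i m : Fin K} (hm : isMax Q m) (hi : ¬ isMax Q i) :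
    ((#{j ∈ univ.filter (fun j => ¬ isMax Q j) | gapQ Q j ≤ gapQ Q i} : ℕ) : ℝ)
      ≤ Dbase Q i := by
  have hp := gapQ_pos hi
  set A := {j ∈ univ.filter (fun j => ¬ isMax Q j) | gapQ Q j ≤ gapQ Q i} with hA
  have hiA : i ∈ A := by simp [hA, hi]
  have hmA : m ∉ A.erase i := by simp [hA, hm]
  have hmi : m ≠ i := fun h => hi (h ▸ hm)
  have hcard : #(insert m (A.erase i)) = #A := by
    rw [card_insert_of_notMem hmA, card_erase_add_one hiA]
  have hsub : insert m (A.erase i) ⊆ univ.erase i := by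
    intro j hj
    rcases mem_insert.1 hj with rfl | hj
    · simp [hmi]
    · simp [(mem_erase.1 hj).1]
  rw [Dbase, mul_sum, ← hcard]
  calc ((#(insert m (A.erase i)) : ℕ) : ℝ) = ∑ j ∈ insert m (A.erase i), (1 : ℝ) := by simp
    _ ≤ ∑ j ∈ insert m (A.erase i), (2 * gapQ Q i) ^ 2 * ((gapQ Q j + gapQ Q i) ^ 2)⁻¹ := by
        apply sum_le_sum
        intro j hj
        have hle : gapQ Q j ≤ gapQ Q i := by
          rcases mem_insert.1 hj with rfl | hj
          · exact gapQ_le_of_isMax hm i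
          · exact (mem_filter.1 (mem_erase.1 hj).2).2
        have hj := gapQ_nonneg Q j
        rw [← div_eq_mul_inv, one_le_div (by positivity)]
        gcongr
        linarith
    _ ≤ _ := sum_le_sum_of_subset_of_nonneg hsub (fun j _ _ => by positivity)

lemma one_le_Dbase {i m : Fin K} (hm : isMax Q m) (hi : ¬ isMax Q i) : 1 ≤ Dbase Q i := by
  classical
  refine le_trans ?_ (rank_le_Dbase hm hi)
  exact_mod_cast card_pos.2 ⟨i, by simp [hi]⟩

/-- The infimum defining `D` at a maximizer is attained. -/
lemma exists_Dfun_eq (h : ∃ i, ¬ isMax Q i) (i : Fin K) :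
    ∃ i', ¬ isMax Q i' ∧ Dfun Q i = Dbase Q i' := by
  by_cases hi : isMax Q i
  · rw [Dfun, if_pos hi]
    obtain ⟨i₀, h₀⟩ := h
    refine Set.Nonempty.csInf_mem (s := {x : ℝ | ∃ i', ¬ isMax Q i' ∧ x = Dbase Q i'})
      ⟨_, i₀, h₀, rfl⟩ ((Set.finite_range (Dbase Q)).subset ?_)
    rintro x ⟨i', -, rfl⟩
    exact ⟨i', rfl⟩
  · exact ⟨i, hi, by rw [Dfun, if_neg hi]⟩

end

/-- Lemma G.9 (bounds on the normalizer Z). -/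
theorem lemma_G9 (K : ℕ) (hK : 2 ≤ K) (Q : Fin K → ℝ)
    (huniq : ∃ istar : Fin K, uniqueMax Q istar) :
    1 / 4 ≤ Zfun Q ∧ Zfun Q ≤ 2 + Real.log K := by
  classical
  obtain ⟨m, hm, hu⟩ := huniq
  have hne : ∃ i, ¬ isMax Q i := by
    have : Nontrivial (Fin K) := Fin.nontrivial_iff_two_le.2 hK
    obtain ⟨i, hi⟩ := exists_ne m
    exact ⟨i, fun h => hi (hu i h)⟩
  have hK' : (2 : ℝ) ≤ K := by exact_mod_cast hK
  constructor
  · have h : ∀ i ∈ (univ : Finset (Fin K)), (4 * ((K : ℝ) - 1))⁻¹ ≤ (Dfun Q i)⁻¹ := by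
      intro i _
      obtain ⟨i', hi', he⟩ := exists_Dfun_eq hne i
      rw [he]
      exact inv_anti₀ (by linarith [one_le_Dbase hm hi']) (Dbase_le hi')
    refine le_trans ?_ (card_nsmul_le_sum _ _ _ h)
    rw [card_univ, Fintype.card_fin, nsmul_eq_mul, ← div_eq_mul_inv,
      div_le_div_iff₀ (by norm_num) (by linarith)]
    linarith
  · set s := univ.filter (fun j => ¬ isMax Q j) with hs
    have hse : s = univ.erase m := by
      ext j
      simp only [hs, mem_filter, mem_univ, true_and, mem_erase, and_true]
      exact not_congr ⟨hu j, fun h => h ▸ hm⟩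
    have hmax : (Dfun Q m)⁻¹ ≤ 1 := by
      obtain ⟨i', hi', he⟩ := exists_Dfun_eq hne m
      rw [he]
      exact inv_le_one_of_one_le₀ (one_le_Dbase hm hi')
    have hrest : ∑ i ∈ s, (Dfun Q i)⁻¹
        ≤ ∑ i ∈ s, ((#{j ∈ s | gapQ Q j ≤ gapQ Q i} : ℕ) : ℝ)⁻¹ := by
      apply sum_le_sum
      intro i hi
      have hi' : ¬ isMax Q i := (mem_filter.1 hi).2
      rw [Dfun, if_neg hi']
      refine inv_anti₀ ?_ (rank_le_Dbase hm hi')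
      exact Nat.cast_pos.2 (card_pos.2 ⟨i, mem_filter.2 ⟨hi, le_rfl⟩⟩)
    have hharm := sum_inv_rank_le_harmonic (gapQ Q) s
    have hcard : #s = K - 1 := by
      rw [hse, card_erase_of_mem (mem_univ m), card_univ, Fintype.card_fin]
    have hlog : (harmonic #s : ℝ) ≤ 1 + Real.log K := by
      refine (harmonic_le_one_add_log _).trans ?_
      rw [hcard]
      have h1 : (0 : ℝ) < ((K - 1 : ℕ) : ℝ) := by
        exact_mod_cast (by omega : 0 < K - 1)
      have h2 : ((K - 1 : ℕ) : ℝ) ≤ K := by exact_mod_cast Nat.sub_le K 1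
      linarith [Real.log_le_log h1 h2]
    rw [Zfun, ← add_sum_erase univ _ (mem_univ m), ← hse]
    linarith
end
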